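/- If |γ_1| > 1, |γ_{2N}| > 1, and |γ_k| > 2 for every k with 2 ≤ k ≤ 2N−1, then the matrix J has no real eigenvalue. -/

import Mathlib

/-!
The row of `J` at site `k` has off-diagonal absolute sum equal to the number of neighbours of `k` in
the path, so Gershgorin's theorem puts every eigenvalue in a disc around some `I * γ k` of radius
`1` (end sites) or `2` (inner sites). As `|γ k|` exceeds this radius, the disc misses the real axis.
-/

open SimpleGraph

theorem exists_mem_closedBall_of_mem_spectrum {K n : Type*} [NormedField K] [Fintype n]
    [DecidableEq n] {A : Matrix n n K} {μ : K} (hμ : μ ∈ spectrum K A) :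
    ∃ k, μ ∈ Metric.closedBall (A k k) (∑ j ∈ Finset.univ.erase k, ‖A k j‖) := by
  rw [← Matrix.spectrum_toLin'] at hμ
  exact eigenvalue_mem_ball (.of_mem_spectrum hμ)

theorem im_ne_zero_of_mem_closedBall {z w : ℂ} {r : ℝ} (hz : z ∈ Metric.closedBall w r)
    (hr : r < |w.im|) : z.im ≠ 0 := by
  intro hreal
  have him : |w.im| ≤ r := calc
    |w.im| = |(z - w).im| := by rw [Complex.sub_im, hreal, zero_sub, abs_neg]
    _ ≤ ‖z - w‖ := Complex.abs_im_le_norm _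
    _ ≤ r := mem_closedBall_iff_norm.mp hz
  exact him.not_gt hr

section Graph

variable {V : Type*} [Fintype V] [DecidableEq V] {G : SimpleGraph V} [DecidableRel G.Adj]

theorem sum_norm_erase_le_degree {E : Type*} [Norm E] {A : Matrix V V E} {v : V}
    (hA : ∀ w, v ≠ w → ‖A v w‖ ≤ G.adjMatrix ℝ v w) :
    ∑ w ∈ Finset.univ.erase v, ‖A v w‖ ≤ G.degree v := calc
  ∑ w ∈ Finset.univ.erase v, ‖A v w‖ ≤ ∑ w ∈ Finset.univ.erase v, G.adjMatrix ℝ v w :=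
    Finset.sum_le_sum fun w hw ↦ hA w (Finset.ne_of_mem_erase hw).symm
  _ = ∑ w, G.adjMatrix ℝ v w := Finset.sum_erase _ (by simp)
  _ = G.degree v := by
    simp [adjMatrix_apply, ← card_neighborFinset_eq_degree, neighborFinset_eq_filter]

theorem im_ne_zero_of_mem_spectrum_of_degree_lt {A : Matrix V V ℂ}
    (hoff : ∀ v w, v ≠ w → ‖A v w‖ ≤ G.adjMatrix ℝ v w)
    (hdiag : ∀ v, G.degree v < |(A v v).im|) {μ : ℂ} (hμ : μ ∈ spectrum ℂ A) : μ.im ≠ 0 := by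
  obtain ⟨v, hv⟩ := exists_mem_closedBall_of_mem_spectrum hμ
  exact im_ne_zero_of_mem_closedBall hv ((sum_norm_erase_le_degree (hoff v)).trans_lt (hdiag v))

end Graph

section PathGraph

variable {n : ℕ} [DecidableRel (pathGraph n).Adj]

theorem degree_pathGraph_le_two (k : Fin n) : (pathGraph n).degree k ≤ 2 := by
  have hsub : ((pathGraph n).neighborFinset k).map Fin.valEmbedding ⊆
      {(k : ℕ) - 1, (k : ℕ) + 1} := by
    intro i hi
    simp only [Finset.mem_map, mem_neighborFinset, pathGraph_adj, Fin.valEmbedding_apply] at hi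
    grind
  calc (pathGraph n).degree k = (((pathGraph n).neighborFinset k).map Fin.valEmbedding).card := by
        rw [Finset.card_map, card_neighborFinset_eq_degree]
    _ ≤ ({(k : ℕ) - 1, (k : ℕ) + 1} : Finset ℕ).card := Finset.card_le_card hsub
    _ ≤ 2 := Finset.card_le_two

theorem degree_pathGraph_le_one {k : Fin n} (hk : (k : ℕ) = 0 ∨ (k : ℕ) = n - 1) :
    (pathGraph n).degree k ≤ 1 := by
  rw [← card_neighborFinset_eq_degree, Finset.card_le_one]
  intro i hi j hj
  rw [mem_neighborFinset, pathGraph_adj] at hi hj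
  omega

theorem stmt_6_general (hn : 0 < n) {J : Matrix (Fin n) (Fin n) ℂ}
    (hoff : ∀ k m, k ≠ m → ‖J k m‖ ≤ (pathGraph n).adjMatrix ℝ k m)
    (hfirst : 1 < |(J ⟨0, hn⟩ ⟨0, hn⟩).im|)
    (hlast : 1 < |(J ⟨n - 1, Nat.sub_one_lt_of_lt hn⟩ ⟨n - 1, Nat.sub_one_lt_of_lt hn⟩).im|)
    (hmid : ∀ k : Fin n, 0 < (k : ℕ) → (k : ℕ) < n - 1 → 2 < |(J k k).im|)
    {μ : ℂ} (hμ : μ ∈ spectrum ℂ J) : μ.im ≠ 0 := by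
  refine im_ne_zero_of_mem_spectrum_of_degree_lt hoff (fun k ↦ ?_) hμ
  by_cases hend : (k : ℕ) = 0 ∨ (k : ℕ) = n - 1
  · have hk : 1 < |(J k k).im| := by
      rcases hend with h | h
      · rwa [show k = ⟨0, hn⟩ from Fin.ext h]
      · rwa [show k = ⟨n - 1, Nat.sub_one_lt_of_lt hn⟩ from Fin.ext h]
    exact lt_of_le_of_lt (mod_cast degree_pathGraph_le_one hend) hk
  · exact lt_of_le_of_lt (mod_cast degree_pathGraph_le_two k) (hmid k (by omega) (by omega))

end PathGraph

/-- broken PT symmetry, part 2: if `|γ_1| > 1`, `|γ_{2N}| > 1`, and `|γ_k| > 2`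
for all `2 ≤ k ≤ 2N−1` (written `0`-based below), then `J` has no real eigenvalue. -/
theorem stmt_6 (N : ℕ) (hN : 1 ≤ N) (γ : Fin (2 * N) → ℝ)
    (hγ : ∀ k : Fin (2 * N), γ k = - γ ⟨2 * N - 1 - (k : ℕ), by have := k.isLt; omega⟩)
    (J : Matrix (Fin (2 * N)) (Fin (2 * N)) ℂ)
    (hJ : ∀ k m : Fin (2 * N), J k m =
      if (k : ℕ) + 1 = (m : ℕ) then 1
      else if (m : ℕ) + 1 = (k : ℕ) then 1
      else if k = m then Complex.I * (γ k : ℂ) else 0)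
    (hfirst : |γ ⟨0, by omega⟩| > 1)
    (hlast : |γ ⟨2 * N - 1, by omega⟩| > 1)
    (hmid : ∀ k : Fin (2 * N), 0 < (k : ℕ) → (k : ℕ) < 2 * N - 1 → |γ k| > 2) :
    ∀ μ : ℂ, μ ∈ spectrum ℂ J → μ.im ≠ 0 := by
  classical
  have hoff : ∀ k m, k ≠ m → ‖J k m‖ ≤ (pathGraph (2 * N)).adjMatrix ℝ k m := by
    intro k m hkm
    rw [hJ, if_neg hkm, ← ite_or, adjMatrix_apply, pathGraph_adj]
    split_ifs <;> simp
  have him (k) : (J k k).im = γ k := by simp [hJ]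
  exact fun _ ↦ stmt_6_general (by omega) hoff (by rwa [him]) (by rwa [him]) (by simpa only [him])
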